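/- arXiv:1811.06113 — 4 statements merged into one kernel-verified Lean document; each statement's English description precedes it below -/
import Mathlib

section
/- For every supplier i and every bid vector α ∈ ℝ^N, the function t ↦ φ_i(α[i := t]) (supplier i's profit as a function of her own bid, with the other bids held fixed) is strictly concave on ℝ, where α[i := t] denotes α with its i-th coordinate replaced by t. -/
theorem quad_strictConcaveOn (A B K : ℝ) (hK : 0 < K) :
    StrictConcaveOn ℝ Set.univ (fun t : ℝ => A + B * t - K * t ^ 2) := by
  refine ⟨convex_univ, ?_⟩
  intro x _ y _ hxy a b ha hb hab
  have hb' : b = 1 - a := by linarith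
  have h : 0 < K * (a * b * (x - y) ^ 2) := by
    have : x - y ≠ 0 := sub_ne_zero.mpr hxy
    positivity
  simp only [smul_eq_mul]
  subst hb'
  nlinarith [h]

/-- **Strict concavity of each supplier's profit in her own bid.** -/
theorem profit_strictConcaveOn
    (N : ℕ) (hN : 2 ≤ N) (β : Fin N → ℝ) (hβ : ∀ i, 0 < β i)
    (Q ξ : ℝ) (θ1 θ2 : Fin N → ℝ)
    (S : ℝ) (hS : S = ∑ l, 1 / β l)
    (R : (Fin N → ℝ) → ℝ)
    (hR : ∀ α, R α = (Q + ∑ l, α l / β l) / S)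
    (P : (Fin N → ℝ) → Fin N → ℝ)
    (hP : ∀ α i, P α i = (R α - α i) / β i)
    (φ : Fin N → (Fin N → ℝ) → ℝ)
    (hφ : ∀ i α, φ i α
      = (R α - (θ1 i + θ2 i * ξ)) * P α i - β i / 2 * (P α i) ^ 2)
    (i : Fin N) (α : Fin N → ℝ) :
    StrictConcaveOn ℝ Set.univ (fun t : ℝ => φ i (Function.update α i t)) := by
  have hsum : ∀ f : Fin N → ℝ, ∑ l, f l = f i + ∑ l ∈ Finset.univ.erase i, f l := fun f =>
    (Finset.add_sum_erase _ f (Finset.mem_univ i)).symm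
  have hT : 0 < ∑ l ∈ Finset.univ.erase i, 1 / β l := by
    apply Finset.sum_pos (fun l _ => one_div_pos.mpr (hβ l))
    rw [← Finset.card_pos, Finset.card_erase_of_mem (Finset.mem_univ i), Finset.card_univ,
      Fintype.card_fin]
    omega
  have hbi := hβ i
  rw [hsum] at hS
  set T := ∑ l ∈ Finset.univ.erase i, 1 / β l
  have hSpos : 0 < S := by rw [hS]; positivity
  obtain ⟨C, hC⟩ : ∃ C, C = ∑ l ∈ Finset.univ.erase i, α l / β l := ⟨_, rfl⟩
  obtain ⟨b, hb⟩ : ∃ b, b = 1 / (β i * S) := ⟨_, rfl⟩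
  obtain ⟨c, hc⟩ : ∃ c, c = (Q + C) / S := ⟨_, rfl⟩
  have hb0 : 0 < b := by rw [hb]; positivity
  have hb1 : b < 1 := by
    rw [hb, div_lt_one (by positivity), hS, mul_add, mul_one_div_cancel hbi.ne']
    have := mul_pos hbi hT
    linarith
  have hRt : ∀ t, R (Function.update α i t) = c + b * t := by
    intro t
    have h2 : ∑ l ∈ Finset.univ.erase i, Function.update α i t l / β l = C := by
      rw [hC]
      refine Finset.sum_congr rfl fun l hl => ?_
      rw [Function.update_of_ne (Finset.ne_of_mem_erase hl)]
    rw [hR, hsum, h2, Function.update_self, hc, hb]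
    field_simp
    ring
  have hK : 0 < (1 - b) * (1 + b) / (2 * β i) := by
    have : 0 < 1 - b := by linarith
    positivity
  obtain ⟨d, hd⟩ : ∃ d, d = θ1 i + θ2 i * ξ := ⟨_, rfl⟩
  convert quad_strictConcaveOn ((c - d) * c / β i - c ^ 2 / (2 * β i))
    ((b * c - (c - d) * (1 - b) + c * (1 - b)) / β i) _ hK using 2 with t
  rw [hφ, hP, hRt, Function.update_self, ← hd]
  field_simp
  ring
end

section
/- For every supplier i and every bid vector α ∈ ℝ^N, the point t* = ( β̂_i · Q_i(α) − (β̂_i − 1) · (θ_{i1} + θ_{i2} ξ) ) / (1 − β̂_i²) is the unique global maximizer over ℝ of the function t ↦ φ_i(α[i := t]): that is, φ_i(α[i := t*]) ≥ φ_i(α[i := t]) for all t ∈ ℝ, with equality only for t = t*. -/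
/-- **Unique best response.** The point `t*` is the unique global maximizer of
supplier `i`'s profit as a function of her own bid. -/
theorem best_response_unique_maximizer
    (N : ℕ) (hN : 2 ≤ N) (β : Fin N → ℝ) (hβ : ∀ i, 0 < β i)
    (Q ξ : ℝ) (θ1 θ2 : Fin N → ℝ)
    (S : ℝ) (hS : S = ∑ l, 1 / β l)
    (R : (Fin N → ℝ) → ℝ)
    (hR : ∀ α, R α = (Q + ∑ l, α l / β l) / S)
    (P : (Fin N → ℝ) → Fin N → ℝ)
    (hP : ∀ α i, P α i = (R α - α i) / β i)
    (βh : Fin N → ℝ) (hβh : ∀ i, βh i = (1 / β i) / S)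
    (Qi : Fin N → (Fin N → ℝ) → ℝ)
    (hQi : ∀ i α, Qi i α = (Q + ∑ k ∈ Finset.univ.erase i, α k / β k) / S)
    (φ : Fin N → (Fin N → ℝ) → ℝ)
    (hφ : ∀ i α, φ i α
      = (R α - (θ1 i + θ2 i * ξ)) * P α i - β i / 2 * (P α i) ^ 2)
    (i : Fin N) (α : Fin N → ℝ)
    (tstar : ℝ)
    (htstar : tstar
      = (βh i * Qi i α - (βh i - 1) * (θ1 i + θ2 i * ξ)) / (1 - (βh i) ^ 2)) :
    ∀ t : ℝ, φ i (Function.update α i t) ≤ φ i (Function.update α i tstar) ∧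
      (φ i (Function.update α i t) = φ i (Function.update α i tstar) → t = tstar) := by
  have hb0 : 0 < β i := hβ i
  have hpos : ∀ l, 0 < 1 / β l := fun l => one_div_pos.mpr (hβ l)
  have hsplit : S = 1 / β i + ∑ l ∈ Finset.univ.erase i, 1 / β l := by
    rw [hS, ← Finset.add_sum_erase _ _ (Finset.mem_univ i)]
  have hne : (Finset.univ.erase i : Finset (Fin N)).Nonempty := by
    rw [← Finset.card_pos, Finset.card_erase_of_mem (Finset.mem_univ i), Finset.card_univ,
      Fintype.card_fin]
    omega
  have hrest : 0 < ∑ l ∈ Finset.univ.erase i, 1 / β l :=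
    Finset.sum_pos (fun l _ => hpos l) hne
  have hi := hpos i
  have hSpos : 0 < S := by linarith
  have hbpos : 0 < βh i := by rw [hβh]; exact div_pos hi hSpos
  have hblt : βh i < 1 := by rw [hβh, div_lt_one hSpos]; linarith
  have hRt : ∀ t, R (Function.update α i t) = Qi i α + βh i * t := by
    intro t
    rw [hR, hQi, hβh, ← Finset.add_sum_erase _ _ (Finset.mem_univ i)]
    have : ∑ l ∈ Finset.univ.erase i, Function.update α i t l / β l
        = ∑ l ∈ Finset.univ.erase i, α l / β l := by
      refine Finset.sum_congr rfl fun l hl => ?_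
      rw [Function.update_of_ne (Finset.ne_of_mem_erase hl)]
    rw [this, Function.update_self]
    ring
  have hD : 0 < 1 - (βh i) ^ 2 := by nlinarith
  have hts : tstar * (1 - (βh i) ^ 2)
      = βh i * Qi i α - (βh i - 1) * (θ1 i + θ2 i * ξ) := by
    rw [htstar, div_mul_cancel₀ _ hD.ne']
  have key : ∀ t, φ i (Function.update α i tstar) - φ i (Function.update α i t)
      = (1 - (βh i) ^ 2) / (2 * β i) * (t - tstar) ^ 2 := by
    intro t
    simp only [hφ, hP, hRt, Function.update_self]
    generalize βh i = b at *
    generalize Qi i α = q at *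
    generalize θ1 i + θ2 i * ξ = c at *
    generalize β i = d at *
    field_simp
    linear_combination (2 * (t - tstar)) * hts
  intro t
  have hk := key t
  have hc : 0 < (1 - (βh i) ^ 2) / (2 * β i) := by positivity
  refine ⟨?_, fun h => ?_⟩
  · have := mul_nonneg hc.le (sq_nonneg (t - tstar))
    linarith
  · rw [h, sub_self] at hk
    rcases mul_eq_zero.mp hk.symm with h1 | h1
    · exact absurd h1 hc.ne'
    · exact sub_eq_zero.mp (pow_eq_zero_iff two_ne_zero |>.mp h1)
end

section
/- The bidding game has a unique Nash equilibrium: given an upper bound ᾱ > 0, there exists a unique vector α* ∈ [0, ᾱ]^N such that for every supplier i and every t ∈ [0, ᾱ], φ_i(α*) ≥ φ_i(α*[i := t]), where α*[i := t] denotes α* with its i-th coordinate replaced by t. -/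
/-- Projection onto `[0, a]`. -/
noncomputable def clampTo (a x : ℝ) : ℝ := max 0 (min a x)

lemma clampTo_mem {a : ℝ} (ha : 0 < a) (x : ℝ) : clampTo a x ∈ Set.Icc (0 : ℝ) a := by
  unfold clampTo
  exact ⟨le_max_left _ _, max_le ha.le (min_le_left _ _)⟩

lemma clampTo_vi {a : ℝ} (ha : 0 < a) (x t : ℝ) (ht : t ∈ Set.Icc (0 : ℝ) a) :
    (t - clampTo a x) * (x - clampTo a x) ≤ 0 := by
  obtain ⟨h0, h1⟩ := ht
  unfold clampTo
  rcases le_total a x with h | h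
  · rw [min_eq_left h, max_eq_right ha.le]
    nlinarith
  · rw [min_eq_right h]
    rcases le_total 0 x with h' | h'
    · rw [max_eq_right h']; simp
    · rw [max_eq_left h']; nlinarith

lemma clampTo_lip {a : ℝ} (x y : ℝ) : |clampTo a x - clampTo a y| ≤ |x - y| := by
  unfold clampTo
  have h1 := abs_max_sub_max_le_max 0 (min a x) 0 (min a y)
  have h2 := abs_min_sub_min_le_max a x a y
  simp only [sub_self, abs_zero] at h1 h2
  rw [max_eq_right (abs_nonneg (min a x - min a y))] at h1
  rw [max_eq_right (abs_nonneg (x - y))] at h2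
  exact h1.trans h2

/-- **Existence and uniqueness of the Nash equilibrium of the bidding game.** -/
theorem nash_equilibrium_exists_unique
    (N : ℕ) (hN : 2 ≤ N) (β : Fin N → ℝ) (hβ : ∀ i, 0 < β i)
    (Q ξ : ℝ) (θ1 θ2 : Fin N → ℝ)
    (ᾱ : ℝ) (hᾱ : 0 < ᾱ)
    (S : ℝ) (hS : S = ∑ l, 1 / β l)
    (R : (Fin N → ℝ) → ℝ)
    (hR : ∀ α, R α = (Q + ∑ l, α l / β l) / S)
    (P : (Fin N → ℝ) → Fin N → ℝ)
    (hP : ∀ α i, P α i = (R α - α i) / β i)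
    (φ : Fin N → (Fin N → ℝ) → ℝ)
    (hφ : ∀ i α, φ i α
      = (R α - (θ1 i + θ2 i * ξ)) * P α i - β i / 2 * (P α i) ^ 2) :
    ∃! αstar : Fin N → ℝ,
      (∀ i, αstar i ∈ Set.Icc (0 : ℝ) ᾱ) ∧
      (∀ i, ∀ t ∈ Set.Icc (0 : ℝ) ᾱ,
        φ i (Function.update αstar i t) ≤ φ i αstar) := by
  have hw : ∀ i, 0 < 1 / β i := fun i => one_div_pos.mpr (hβ i)
  have : Nontrivial (Fin N) := Fin.nontrivial_iff_two_le.mpr hN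
  have hlt : ∀ i, 1 / β i < S := by
    intro i
    obtain ⟨j, hj⟩ := exists_ne i
    rw [hS]
    exact Finset.single_lt_sum hj (Finset.mem_univ i) (Finset.mem_univ j) (hw j)
      (fun k _ _ => (hw k).le)
  have i0 : Fin N := ⟨0, by omega⟩
  have hSpos : 0 < S := (hw i0).trans (hlt i0)
  obtain ⟨k, hk⟩ : ∃ k : Fin N → ℝ, ∀ i, k i = 1 / β i / S := ⟨_, fun _ => rfl⟩
  obtain ⟨c, hc⟩ : ∃ c : Fin N → ℝ, ∀ i, c i = θ1 i + θ2 i * ξ := ⟨_, fun _ => rfl⟩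
  have hk0 : ∀ i, 0 < k i := fun i => by rw [hk]; exact div_pos (hw i) hSpos
  have hk1 : ∀ i, k i < 1 := fun i => by rw [hk, div_lt_one hSpos]; exact hlt i
  have hksum : ∑ i, k i = 1 := by
    simp only [hk]
    rw [← Finset.sum_div, ← hS, div_self hSpos.ne']
  have hR' : ∀ α, R α = Q / S + ∑ l, k l * α l := by
    intro α
    rw [hR, add_div, Finset.sum_div]
    congr 1
    refine Finset.sum_congr rfl fun l _ => ?_
    rw [hk]; ring
  have hφ' : ∀ i α, φ i α = 1 / β i / 2 * ((R α - c i) ^ 2 - (α i - c i) ^ 2) := by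
    intro i α
    have := (hβ i).ne'
    rw [hφ, hP, ← hc]
    field_simp
    ring
  have hRu : ∀ α i t, R (Function.update α i t) = R α + k i * (t - α i) := by
    intro α i t
    rw [hR', hR', add_assoc]
    congr 1
    rw [← sub_eq_iff_eq_add', ← Finset.sum_sub_distrib, Finset.sum_eq_single i]
    · rw [Function.update_self]; ring
    · intro j _ hj
      rw [Function.update_of_ne hj]; ring
    · intro h; exact absurd (Finset.mem_univ i) h
  have hdiff : ∀ i α t, φ i (Function.update α i t) - φ i α
      = 1 / β i / 2 * (2 * ((t - α i) * (k i * R α + (1 - k i) * c i - α i))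
        - (1 - k i ^ 2) * (t - α i) ^ 2) := by
    intro i α t
    rw [hφ', hφ', hRu, Function.update_self]
    ring
  have hk2 : ∀ i, 0 < 1 - k i ^ 2 := fun i => by nlinarith [hk0 i, hk1 i]
  have hiff : ∀ α : Fin N → ℝ, ((∀ i, α i ∈ Set.Icc (0 : ℝ) ᾱ) ∧
      (∀ i, ∀ t ∈ Set.Icc (0 : ℝ) ᾱ, φ i (Function.update α i t) ≤ φ i α)) ↔
      ∀ i, α i = clampTo ᾱ (k i * R α + (1 - k i) * c i) := by
    intro α
    constructor
    · rintro ⟨hm, hn⟩ i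
      set x := k i * R α + (1 - k i) * c i with hx
      have h1 := hn i _ (clampTo_mem hᾱ x)
      have h2 := hdiff i α (clampTo ᾱ x)
      have h3 := clampTo_vi hᾱ x _ (hm i)
      rw [← hx] at h2
      have h4 : 2 * ((clampTo ᾱ x - α i) * (x - α i))
        - (1 - k i ^ 2) * (clampTo ᾱ x - α i) ^ 2 ≤ 0 := by
        by_contra hcon
        push Not at hcon
        have := mul_pos (half_pos (hw i)) hcon
        linarith
      have h5 : (1 + k i ^ 2) * (clampTo ᾱ x - α i) ^ 2 ≤ 0 := by nlinarith
      have h6 : (clampTo ᾱ x - α i) ^ 2 ≤ 0 := by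
        nlinarith [mul_nonneg (sq_nonneg (k i)) (sq_nonneg (clampTo ᾱ x - α i))]
      have h7 := pow_eq_zero_iff (two_ne_zero) |>.mp (le_antisymm h6 (sq_nonneg _))
      linarith
    · intro h
      refine ⟨fun i => by rw [h i]; exact clampTo_mem hᾱ _, fun i t ht => ?_⟩
      have h2 := hdiff i α t
      have h3 := clampTo_vi hᾱ (k i * R α + (1 - k i) * c i) t ht
      rw [← h i] at h3
      have h4 : 2 * ((t - α i) * (k i * R α + (1 - k i) * c i - α i))
        - (1 - k i ^ 2) * (t - α i) ^ 2 ≤ 0 := by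
        nlinarith [mul_nonneg (hk2 i).le (sq_nonneg (t - α i))]
      have := mul_nonpos_of_nonneg_of_nonpos (half_pos (hw i)).le h4
      linarith
  obtain ⟨A, hA⟩ : ∃ A : ℝ → Fin N → ℝ, ∀ r i,
      A r i = clampTo ᾱ (k i * r + (1 - k i) * c i) := ⟨fun r i => _, fun _ _ => rfl⟩
  have hKlt : ∑ i, k i ^ 2 < 1 := by
    rw [← hksum]
    exact Finset.sum_lt_sum_of_nonempty ⟨i0, Finset.mem_univ _⟩
      fun i _ => by nlinarith [hk0 i, hk1 i]
  have hK0 : 0 ≤ ∑ i, k i ^ 2 := Finset.sum_nonneg fun i _ => sq_nonneg _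
  have hcontr : ContractingWith (⟨∑ i, k i ^ 2, hK0⟩ : NNReal) (fun r => R (A r)) := by
    refine ⟨by exact_mod_cast hKlt, LipschitzWith.of_dist_le_mul fun x y => ?_⟩
    rw [Real.dist_eq, Real.dist_eq, hR', hR', add_sub_add_left_eq_sub,
      ← Finset.sum_sub_distrib]
    refine (Finset.abs_sum_le_sum_abs _ _).trans ?_
    change _ ≤ (∑ i, k i ^ 2) * |x - y|
    rw [Finset.sum_mul]
    refine Finset.sum_le_sum fun i _ => ?_
    rw [← mul_sub, abs_mul, abs_of_pos (hk0 i), hA, hA, sq, mul_assoc]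
    refine mul_le_mul_of_nonneg_left ((clampTo_lip _ _).trans ?_) (hk0 i).le
    rw [add_sub_add_right_eq_sub, ← mul_sub, abs_mul, abs_of_pos (hk0 i)]
  have hfix : R (A (hcontr.fixedPoint)) = hcontr.fixedPoint := hcontr.fixedPoint_isFixedPt
  refine ⟨A hcontr.fixedPoint, ?_, ?_⟩
  · refine (hiff _).mpr fun i => ?_
    rw [hfix, hA]
  · intro α hα
    have h := (hiff α).mp hα
    have hαA : α = A (R α) := by
      funext i
      rw [hA]; exact h i
    have hfp : R α = hcontr.fixedPoint :=
      hcontr.fixedPoint_unique (show R (A (R α)) = R α by rw [← hαA])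
    rw [← hfp]; exact hαA
end

section
/- Eventual monotone decrease of the crude bound: fix an integer n ≥ 0 and a real δ with 0 < δ < 1, and define η̄ : (0, ∞) → ℝ by η̄(x) = Σ_{i=0}^{n} (x^i / i!) · δ^i · (1−δ)^{x−i}, where (1−δ)^{x−i} = exp((x−i) · log(1−δ)). Then η̄ is strictly decreasing on the interval ( n / (−log(1−δ)), ∞ ). -/
/-- **Eventual monotone decrease of the crude bound.** -/
theorem crude_bound_strictAntiOn
    (n : ℕ) (δ : ℝ) (hδ0 : 0 < δ) (hδ1 : δ < 1)
    (etaBar : ℝ → ℝ)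
    (hetaBar : ∀ x : ℝ, etaBar x
      = ∑ i ∈ Finset.range (n + 1),
          x ^ i / (Nat.factorial i : ℝ) * δ ^ i
            * Real.exp ((x - (i : ℝ)) * Real.log (1 - δ))) :
    StrictAntiOn etaBar (Set.Ioi ((n : ℝ) / (-Real.log (1 - δ)))) := by
  have hL : 0 < -Real.log (1 - δ) := by
    have := Real.log_neg (by linarith : (0:ℝ) < 1 - δ) (by linarith)
    linarith
  set L := Real.log (1 - δ) with hLdef
  intro a ha b hb hab
  rw [Set.mem_Ioi] at ha
  have ha0 : 0 < a := lt_of_le_of_lt (by positivity) ha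
  have hna : (n : ℝ) < a * (-L) := (div_lt_iff₀ hL).1 ha
  rw [hetaBar, hetaBar]
  apply Finset.sum_lt_sum_of_nonempty (by simp)
  intro i hi
  have hin : (i : ℝ) ≤ n := by
    have := Finset.mem_range.1 hi
    exact_mod_cast (by omega : i ≤ n)
  have h1 : b ≤ a * Real.exp ((b - a) / a) := by
    have h := Real.add_one_le_exp ((b - a) / a)
    calc b = a * ((b - a) / a + 1) := by field_simp; ring
      _ ≤ _ := by gcongr
  have h2 : b ^ i ≤ a ^ i * Real.exp (i * ((b - a) / a)) := by
    calc b ^ i ≤ (a * Real.exp ((b - a) / a)) ^ i := by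
          have hb0 : 0 ≤ b := by linarith
          gcongr
      _ = _ := by rw [mul_pow, Real.exp_nat_mul]
  have h3 : (i : ℝ) * ((b - a) / a) < (b - a) * (-L) := by
    rw [← mul_div_assoc, div_lt_iff₀ ha0]
    nlinarith
  have h4 : b ^ i * Real.exp ((b - i) * L) < a ^ i * Real.exp ((a - i) * L) := by
    calc b ^ i * Real.exp ((b - i) * L)
        ≤ a ^ i * Real.exp (i * ((b - a) / a)) * Real.exp ((b - i) * L) := by gcongr
      _ = a ^ i * Real.exp (i * ((b - a) / a) + (b - i) * L) := by
          rw [mul_assoc, ← Real.exp_add]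
      _ < _ := by
          apply mul_lt_mul_of_pos_left _ (by positivity)
          apply Real.exp_lt_exp.2
          linarith
  have h5 : 0 < δ ^ i / (Nat.factorial i : ℝ) := by positivity
  have h6 := mul_lt_mul_of_pos_left h4 h5
  calc _ = δ ^ i / (Nat.factorial i : ℝ) * (b ^ i * Real.exp ((b - i) * L)) := by ring
    _ < _ := h6
    _ = _ := by ring
end
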